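/- arXiv:2401.07536 — 5 statements merged into one kernel-verified Lean document; each statement's English description precedes it below -/
import Mathlib

section
/- Let y_0 be a nondominated point of (P(0)) and let (z*,y*) ∈ S′_{Y_+}(y_0). Then y*(y) ≥ 0 for every y ∈ Y_+. If moreover the Slater condition holds, then y*(y) > 0 for every y ∈ int(Y_+); in particular y* ≠ 0. -/
open Pointwise Filter Topology

namespace Paper

section Defs

variable {E : Type*} [NormedAddCommGroup E] [NormedSpace ℝ E]

/-- The cone hull of a set: all nonnegative multiples of its elements. -/
def coneHull (A : Set E) : Set E := {x | ∃ r : ℝ, 0 ≤ r ∧ ∃ a ∈ A, x = r • a}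

/-- A cone: a nonempty set closed under multiplication by nonnegative scalars. -/
def IsCone (K : Set E) : Prop := K.Nonempty ∧ ∀ r : ℝ, 0 ≤ r → ∀ x ∈ K, r • x ∈ K

/-- A pointed cone: `K ∩ (-K) = {0}`. -/
def IsPointed (K : Set E) : Prop := K ∩ (-K) = {0}

/-- A proper cone: `{0} ≠ K ≠ E`. -/
def IsProper (K : Set E) : Prop := K ≠ {0} ∧ K ≠ Set.univ

/-- A solid cone: nonempty interior. -/
def IsSolid (K : Set E) : Prop := (interior K).Nonempty

/-- The contingent cone to `A` at `w`. -/
def contingentCone (A : Set E) (w : E) : Set E :=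
  {v | Filter.liminf (fun h : ℝ => Metric.infDist (w + h • v) A / h) (𝓝[>] (0:ℝ)) = 0}

end Defs

section SV

variable {X Y Z : Type*}
  [NormedAddCommGroup X] [NormedSpace ℝ X]
  [NormedAddCommGroup Y] [NormedSpace ℝ Y]
  [NormedAddCommGroup Z] [NormedSpace ℝ Z]

/-- The graph of a set-valued map. -/
def graph (Δ : Z → Set Y) : Set (Z × Y) := {p | p.2 ∈ Δ p.1}

/-- The image of a set by a set-valued map. -/
def imageSet (Δ : Z → Set Y) (A : Set Z) : Set Y := ⋃ w ∈ A, Δ w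

/-- The feasible set map `S(z) = {x ∈ Ω : G(x) ∩ (z - Z₊) ≠ ∅}`. -/
def Smap (Ω : Set X) (G : X → Set Z) (Zp : Set Z) (z : Z) : Set X :=
  {x | x ∈ Ω ∧ (G x ∩ ({z} - Zp)).Nonempty}

/-- The value map `V(z) = F(S(z))`. -/
def Vmap (Ω : Set X) (F : X → Set Y) (G : X → Set Z) (Zp : Set Z) (z : Z) : Set Y :=
  ⋃ x ∈ Smap Ω G Zp z, F x

/-- The map `(V + Y₊)(z) = V(z) + Y₊`. -/
def VplusMap (Ω : Set X) (F : X → Set Y) (G : X → Set Z) (Zp : Set Z) (Yp : Set Y)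
    (z : Z) : Set Y :=
  Vmap Ω F G Zp z + Yp

/-- The graph of `V + Y₊`. -/
def GraphVplus (Ω : Set X) (F : X → Set Y) (G : X → Set Z) (Zp : Set Z) (Yp : Set Y) :
    Set (Z × Y) :=
  {p : Z × Y | p.2 ∈ Vmap Ω F G Zp p.1 + Yp}

/-- Minimal points of a set `A` with respect to the cone `Yp`. -/
def MinSet (Yp : Set Y) (A : Set Y) : Set Y :=
  {a ∈ A | A ∩ ({a} - Yp) ⊆ {a} + Yp}

/-- The marginal map `M(z) = Min(V(z))`. -/
def Mmap (Ω : Set X) (F : X → Set Y) (G : X → Set Z) (Zp : Set Z) (Yp : Set Y)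
    (z : Z) : Set Y :=
  MinSet Yp (Vmap Ω F G Zp z)

/-- `y₀` is a nondominated point of `(P(0))`. -/
def Nondominated (Ω : Set X) (F : X → Set Y) (G : X → Set Z) (Zp : Set Z) (Yp : Set Y)
    (y0 : Y) : Prop :=
  y0 ∈ closure (Vmap Ω F G Zp 0) ∧
    Vmap Ω F G Zp 0 ∩ ({y0} - Yp) ⊆ {y0} + Yp

/-- `y₀` is a minimal point of `(P(0))`. -/
def MinimalPoint (Ω : Set X) (F : X → Set Y) (G : X → Set Z) (Zp : Set Z) (Yp : Set Y)
    (y0 : Y) : Prop :=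
  y0 ∈ Vmap Ω F G Zp 0 ∧
    Vmap Ω F G Zp 0 ∩ ({y0} - Yp) ⊆ {y0} + Yp

/-- The set `S_{Y₊}(y₀)` of separating pairs of continuous linear functionals. -/
def Sdual (Ω : Set X) (F : X → Set Y) (G : X → Set Z) (Zp : Set Z) (Yp : Set Y) (y0 : Y) :
    Set ((Z →L[ℝ] ℝ) × (Y →L[ℝ] ℝ)) :=
  {p | (∀ z' ∈ -Zp, ∀ y' ∈ ({y0} : Set Y) - Yp, p.1 z' + p.2 y' ≤ p.2 y0) ∧
       (∀ q ∈ GraphVplus Ω F G Zp Yp, p.2 y0 ≤ p.1 q.1 + p.2 q.2)}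

/-- `P(Z,Y)`: closed convex processes with full domain. -/
def PZY : Set (Z → Set Y) :=
  {Δ | IsClosed (graph Δ) ∧ Convex ℝ (graph Δ) ∧ IsCone (graph Δ) ∧ ∀ z, (Δ z).Nonempty}

/-- The set `Λ_{(z*,y*)}` of processes associated to `(z*,y*)`. -/
def Lambda (zs : Z →L[ℝ] ℝ) (ys : Y →L[ℝ] ℝ) : Set (Z → Set Y) :=
  {Δ | Δ ∈ PZY ∧ graph Δ \ {0} ⊆ {p : Z × Y | 0 < -(zs p.1) + ys p.2}}

/-- The set `Γ_{y₀}` of processes associated to `y₀`. -/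
def Gamma (Ω : Set X) (F : X → Set Y) (G : X → Set Z) (Zp : Set Z) (Yp : Set Y) (y0 : Y) :
    Set (Z → Set Y) :=
  ⋃ p ∈ Sdual Ω F G Zp Yp y0 \ {0}, Lambda p.1 p.2

/-- The Slater constraint qualification. -/
def Slater (Ω : Set X) (F : X → Set Y) (G : X → Set Z) (Zp : Set Z) : Prop :=
  ∃ x1 ∈ Ω, (F x1).Nonempty ∧ (G x1 ∩ (-interior Zp)).Nonempty

/-- `Ψ(Δ) = ∪_{x∈Ω}(F(x) + Δ(G(x)+Z₊))`. -/
def Umap (Ω : Set X) (F : X → Set Y) (G : X → Set Z) (Zp : Set Z) (Δ : Z → Set Y) : Set Y :=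
  ⋃ x ∈ Ω, (F x + imageSet Δ (G x + Zp))

/-- The dual map `Φ(Δ)`: nondominated points of the closure of `Ψ(Δ)`. -/
def Phi (Ω : Set X) (F : X → Set Y) (G : X → Set Z) (Zp : Set Z) (Yp : Set Y)
    (Δ : Z → Set Y) : Set Y :=
  {y ∈ closure (Umap Ω F G Zp Δ) | Umap Ω F G Zp Δ ∩ ({y} - Yp) ⊆ {y} + Yp}

/-- `Δ` is a Lagrange multiplier of `(P(0))` at `y₀`. -/
def LagrangeMultiplier (Ω : Set X) (F : X → Set Y) (G : X → Set Z) (Zp : Set Z) (Yp : Set Y)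
    (Δ : Z → Set Y) (y0 : Y) : Prop :=
  y0 ∈ closure (Umap Ω F G Zp Δ) ∧ Umap Ω F G Zp Δ ∩ ({y0} - Yp) ⊆ {y0} + Yp

/-- The graph of the Lagrange process of `(P(0))` at `y₀`. -/
def GraphLagrange (Ω : Set X) (F : X → Set Y) (G : X → Set Z) (Zp : Set Z) (Yp : Set Y)
    (y0 : Y) : Set (Z × Y) :=
  {p : Z × Y | ∀ q ∈ Sdual Ω F G Zp Yp y0, q.1 p.1 ≤ q.2 p.2}

/-- The Lagrange process of `(P(0))` at `y₀`, as a set-valued map. -/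
def Lagrange (Ω : Set X) (F : X → Set Y) (G : X → Set Z) (Zp : Set Z) (Yp : Set Y) (y0 : Y)
    (z : Z) : Set Y :=
  {y | (z, y) ∈ GraphLagrange Ω F G Zp Yp y0}

/-- The contingent derivative of a set-valued map `H` at `(z₀, y₀)`. -/
def contingentDeriv (H : Z → Set Y) (z0 : Z) (y0 : Y) (z : Z) : Set Y :=
  {y | (z, y) ∈ contingentCone (graph H) (z0, y0)}

/-- The S-derivative (Shi derivative) of a set-valued map `H` at `(z₀, y₀)`. -/
def Sderiv (H : Z → Set Y) (z0 : Z) (y0 : Y) (z : Z) : Set Y :=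
  {y | ∃ (h : ℕ → ℝ) (zn : ℕ → Z) (yn : ℕ → Y),
    (∀ n, 0 < h n) ∧ Filter.Tendsto zn Filter.atTop (𝓝 z) ∧
    Filter.Tendsto yn Filter.atTop (𝓝 y) ∧
    Filter.Tendsto (fun n => h n • zn n) Filter.atTop (𝓝 (0:Z)) ∧
    ∀ n, y0 + h n • yn n ∈ H (z0 + h n • zn n)}

/-- The standing assumptions of the paper: `Y₊`, `Z₊` proper solid convex cones, `Ω` nonempty
convex, `F` is `Y₊`-convex and `G` is `Z₊`-convex. -/
def StandingHyp (Ω : Set X) (F : X → Set Y) (G : X → Set Z) (Zp : Set Z) (Yp : Set Y) : Prop :=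
  IsCone Yp ∧ IsProper Yp ∧ IsSolid Yp ∧ Convex ℝ Yp ∧
  IsCone Zp ∧ IsProper Zp ∧ IsSolid Zp ∧ Convex ℝ Zp ∧
  Ω.Nonempty ∧ Convex ℝ Ω ∧
  Convex ℝ {p : X × Y | p.1 ∈ Ω ∧ p.2 ∈ F p.1 + Yp} ∧
  Convex ℝ {p : X × Z | p.1 ∈ Ω ∧ p.2 ∈ G p.1 + Zp}

end SV

variable {X Y Z : Type*}
  [NormedAddCommGroup X] [NormedSpace ℝ X]
  [NormedAddCommGroup Y] [NormedSpace ℝ Y]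
  [NormedAddCommGroup Z] [NormedSpace ℝ Z]

/-!
Testing the left inequality of the dual pair at `(0, y₀ - y)` and at `(-z, y₀)` gives `0 ≤ y*` on
`Y₊` and `0 ≤ z*` on `Z₊`. A nonzero continuous functional is open, so each of `y*`, `z*` that does
not vanish is positive on the interior of the respective cone. If `y*` vanished, `z*` would not, and
a Slater point `z ∈ G x₁ ∩ -int Z₊` would give `z* z < 0`, whereas the right inequality at
`(z, y)` with `y ∈ F x₁` reads `0 ≤ z* z`.
-/

theorem lt_apply_of_mem_interior {𝕜 E : Type*} [Field 𝕜] [LinearOrder 𝕜] [IsStrictOrderedRing 𝕜]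
    [TopologicalSpace 𝕜] [OrderTopology 𝕜] [AddCommGroup E] [TopologicalSpace E] [ContinuousAdd E]
    [Module 𝕜 E] [ContinuousSMul 𝕜 E] {f : E →L[𝕜] 𝕜} {s : Set E} {c : 𝕜} {x : E}
    (hf : f ≠ 0) (hs : ∀ y ∈ s, c ≤ f y) (hx : x ∈ interior s) : c < f x := by
  have hfx : f x ∈ interior (Set.Ici c) := (f.isOpenMap_of_ne_zero hf).mapsTo_interior hs hx
  rwa [interior_Ici] at hfx

theorem IsCone.zero_mem {E : Type*} [NormedAddCommGroup E] [NormedSpace ℝ E] {K : Set E}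
    (hK : IsCone K) : (0 : E) ∈ K := by
  obtain ⟨x, hx⟩ := hK.1
  simpa using hK.2 0 le_rfl x hx

section ValueMap

variable {α β γ : Type*} [NormedAddCommGroup β] [NormedAddCommGroup γ]
  {Ω : Set α} {F : α → Set β} {G : α → Set γ} {Zp : Set γ} {Yp : Set β}

theorem mem_Smap_of_mem (hZ : 0 ∈ Zp) {x : α} {z : γ} (hx : x ∈ Ω) (hz : z ∈ G x) :
    x ∈ Smap Ω G Zp z :=
  ⟨hx, z, hz, z, rfl, 0, hZ, sub_zero z⟩

theorem mk_mem_GraphVplus (hZ : 0 ∈ Zp) (hY : 0 ∈ Yp) {x : α} {z : γ} {y : β}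
    (hx : x ∈ Ω) (hz : z ∈ G x) (hy : y ∈ F x) : (z, y) ∈ GraphVplus Ω F G Zp Yp :=
  ⟨y, Set.mem_biUnion (mem_Smap_of_mem hZ hx hz) hy, 0, hY, add_zero y⟩

end ValueMap

section DualPairs

variable {α : Type*} {Ω : Set α} {F : α → Set Y} {G : α → Set Z} {Zp : Set Z} {Yp : Set Y}
  {y0 : Y} {p : (Z →L[ℝ] ℝ) × (Y →L[ℝ] ℝ)}

theorem nonneg_fst_of_mem_Sdual (hY : 0 ∈ Yp) (hp : p ∈ Sdual Ω F G Zp Yp y0) {z : Z}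
    (hz : z ∈ Zp) : 0 ≤ p.1 z := by
  have hle : p.1 (-z) + p.2 (y0 - 0) ≤ p.2 y0 :=
    hp.1 (-z) (Set.neg_mem_neg.2 hz) (y0 - 0) (Set.sub_mem_sub rfl hY)
  simpa using hle

theorem nonneg_snd_of_mem_Sdual (hZ : 0 ∈ Zp) (hp : p ∈ Sdual Ω F G Zp Yp y0) {y : Y}
    (hy : y ∈ Yp) : 0 ≤ p.2 y := by
  have hle : p.1 0 + p.2 (y0 - y) ≤ p.2 y0 :=
    hp.1 0 (by simpa using hZ) (y0 - y) (Set.sub_mem_sub rfl hy)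
  simpa using hle

theorem snd_ne_zero_of_slater (hZ : 0 ∈ Zp) (hY : 0 ∈ Yp) (hp : p ∈ Sdual Ω F G Zp Yp y0)
    (hp0 : p ≠ 0) (hSlater : Slater Ω F G Zp) : p.2 ≠ 0 := by
  intro hsnd
  obtain ⟨x, hx, ⟨y, hy⟩, z, hz, hz_int⟩ := hSlater
  have hfst : p.1 ≠ 0 := fun h => hp0 (Prod.ext h hsnd)
  have hneg : 0 < p.1 (-z) :=
    lt_apply_of_mem_interior hfst (fun _ => nonneg_fst_of_mem_Sdual hY hp) hz_int
  have hnonneg : p.2 y0 ≤ p.1 z + p.2 y := hp.2 (z, y) (mk_mem_GraphVplus hZ hY hx hz hy)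
  simp only [hsnd, zero_apply, add_zero] at hnonneg
  rw [map_neg, neg_pos] at hneg
  exact hneg.not_ge hnonneg

end DualPairs

theorem stmt_3_general {α : Type*} (Ω : Set α) (F : α → Set Y) (G : α → Set Z) (Zp : Set Z)
    (Yp : Set Y) (hZ : 0 ∈ Zp) (hY : 0 ∈ Yp) (y0 : Y)
    (p : (Z →L[ℝ] ℝ) × (Y →L[ℝ] ℝ)) (hp : p ∈ Sdual Ω F G Zp Yp y0 \ {0}) :
    (∀ y ∈ Yp, 0 ≤ p.2 y) ∧
      (Slater Ω F G Zp → (∀ y ∈ interior Yp, 0 < p.2 y) ∧ p.2 ≠ 0) := by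
  obtain ⟨hpS, hp0⟩ := hp
  have hnonneg : ∀ y ∈ Yp, 0 ≤ p.2 y := fun _ => nonneg_snd_of_mem_Sdual hZ hpS
  refine ⟨hnonneg, fun hSlater => ?_⟩
  have hsnd : p.2 ≠ 0 := snd_ne_zero_of_slater hZ hY hpS hp0 hSlater
  exact ⟨fun _ hy => lt_apply_of_mem_interior hsnd hnonneg hy, hsnd⟩

theorem stmt_3 (Ω : Set X) (F : X → Set Y) (G : X → Set Z) (Zp : Set Z) (Yp : Set Y)
    (hSt : StandingHyp Ω F G Zp Yp)
    (y0 : Y) (hy0 : Nondominated Ω F G Zp Yp y0)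
    (p : (Z →L[ℝ] ℝ) × (Y →L[ℝ] ℝ)) (hp : p ∈ Sdual Ω F G Zp Yp y0 \ {0}) :
    (∀ y ∈ Yp, 0 ≤ p.2 y) ∧
      (Slater Ω F G Zp → (∀ y ∈ interior Yp, 0 < p.2 y) ∧ p.2 ≠ 0) := by
  obtain ⟨hYcone, -, -, -, hZcone, -⟩ := hSt
  exact stmt_3_general Ω F G Zp Yp hZcone.zero_mem hYcone.zero_mem y0 p hp

end Paper
end

section
/- Under the standing convexity assumptions, the set Graph(V+Y_+) := {(z,y) ∈ Z×Y : y ∈ V(z)+Y_+} is convex. -/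
open Pointwise Filter Topology

namespace Paper

variable {X Y Z : Type*}
  [NormedAddCommGroup X] [NormedSpace ℝ X]
  [NormedAddCommGroup Y] [NormedSpace ℝ Y]
  [NormedAddCommGroup Z] [NormedSpace ℝ Z]

/-!
A point `(z, y)` lies in the graph of `V + Y₊` exactly when a single `x` satisfies `(x, z) ∈ epi G`
and `(x, y) ∈ epi F`. The graph is thus the relational composite of `(epi G)⁻¹` with `epi F`, and
inverses and composites of convex relations are convex.
-/

open scoped SetRel

section ConvexRelations

variable {𝕜 α β γ : Type*} [Semiring 𝕜] [PartialOrder 𝕜]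
  [AddCommMonoid α] [SMul 𝕜 α] [AddCommMonoid β] [SMul 𝕜 β] [AddCommMonoid γ] [SMul 𝕜 γ]

theorem convex_setRel_inv {R : SetRel α β} (hR : Convex 𝕜 R) : Convex 𝕜 R.inv :=
  fun _ hp _ hq _ _ ha hb hab => hR hp hq ha hb hab

theorem convex_setRel_comp {R : SetRel α β} {S : SetRel β γ}
    (hR : Convex 𝕜 R) (hS : Convex 𝕜 S) : Convex 𝕜 (R ○ S) := by
  rintro _ ⟨x₁, hR₁, hS₁⟩ _ ⟨x₂, hR₂, hS₂⟩ a b ha hb hab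
  exact ⟨a • x₁ + b • x₂, hR hR₁ hR₂ ha hb hab, hS hS₁ hS₂ ha hb hab⟩

end ConvexRelations

section Epigraph

variable {α β γ : Type*}

/-- The epigraph over `Ω` of a set-valued map `F`, with respect to an ordering cone `C`. It is
encoded as a relation, so that graphs of maps built from epigraphs are relational composites, and
`C` may be an arbitrary set. -/
def epigraphOn [Add β] (Ω : Set α) (F : α → Set β) (C : Set β) : SetRel α β :=
  {p | p.1 ∈ Ω ∧ p.2 ∈ F p.1 + C}

theorem inter_singleton_sub_nonempty_iff [AddGroup β] {A C : Set β} {z : β} :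
    (A ∩ ({z} - C)).Nonempty ↔ z ∈ A + C := by
  simp only [Set.Nonempty, Set.mem_inter_iff, Set.singleton_sub, Set.mem_image, Set.mem_add]
  refine exists_congr fun g => and_congr_right fun _ =>
    exists_congr fun c => and_congr_right fun _ => ?_
  rw [sub_eq_iff_eq_add, eq_comm]

theorem setOf_mem_iUnion_add_eq_comp [Add β] [AddGroup γ] (Ω : Set α) (F : α → Set β)
    (G : α → Set γ) (C : Set β) (D : Set γ) :
    {p : γ × β | p.2 ∈ (⋃ x ∈ {x ∈ Ω | (G x ∩ ({p.1} - D)).Nonempty}, F x) + C} =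
      (epigraphOn Ω G D).inv ○ epigraphOn Ω F C := by
  ext ⟨z, y⟩
  simp only [inter_singleton_sub_nonempty_iff, Set.iUnion₂_add, Set.mem_iUnion₂, exists_prop,
    Set.mem_ofPred_eq, SetRel.mem_comp, SetRel.mem_inv, epigraphOn]
  exact exists_congr fun x => ⟨fun ⟨⟨hx, hz⟩, hy⟩ => ⟨⟨hx, hz⟩, hx, hy⟩,
    fun ⟨⟨hx, hz⟩, _, hy⟩ => ⟨⟨hx, hz⟩, hy⟩⟩

end Epigraph

theorem stmt_6_general {𝕜 α β γ : Type*} [Semiring 𝕜] [PartialOrder 𝕜]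
    [AddCommMonoid α] [SMul 𝕜 α] [AddCommMonoid β] [SMul 𝕜 β] [AddCommGroup γ] [SMul 𝕜 γ]
    {Ω : Set α} {F : α → Set β} {G : α → Set γ} {C : Set β} {D : Set γ}
    (hF : Convex 𝕜 (epigraphOn Ω F C)) (hG : Convex 𝕜 (epigraphOn Ω G D)) :
    Convex 𝕜 {p : γ × β |
      p.2 ∈ (⋃ x ∈ {x ∈ Ω | (G x ∩ ({p.1} - D)).Nonempty}, F x) + C} := by
  rw [setOf_mem_iUnion_add_eq_comp]
  exact convex_setRel_comp (convex_setRel_inv hG) hF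

theorem stmt_6 (Ω : Set X) (F : X → Set Y) (G : X → Set Z) (Zp : Set Z) (Yp : Set Y)
    (hSt : StandingHyp Ω F G Zp Yp) :
    Convex ℝ (GraphVplus Ω F G Zp Yp) := by
  obtain ⟨-, -, -, -, -, -, -, -, -, -, hF, hG⟩ := hSt
  exact stmt_6_general hF hG

end Paper
end

section
/- Let y_0 be a nondominated point of (P(0)). Then (0, y_0) belongs to the boundary of Graph(V+Y_+): one has (0, y_0) ∈ cl(Graph(V+Y_+)) and (0, y_0) ∉ int(Graph(V+Y_+)). -/
/-!
Order `Y` by the cone `K`, and suppose every `v ∈ A` with `v ≤ y₀` satisfies `y₀ ≤ v`. Then `A + K`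
misses `y₀ - interior K`: if `v + p = y₀ - k` with `k` interior and `p ∈ K`, then `y₀ - v = k + p`
is interior to `K`, so `v ≤ y₀`, hence `y₀ ≤ v`, and `K` contains both an interior point and its
negative, which forces `K` to be the whole space. Since `y₀` is a limit of points of
`y₀ - interior K`, it is not interior to `A + K`. For `A = V z₀`, the continuous map `y ↦ (z₀, y)`
carries this frontier point of the fibre to a frontier point of the graph.
-/

open Pointwise Filter Topology

namespace Paper

variable {X Y Z : Type*}
  [NormedAddCommGroup X] [NormedSpace ℝ X]
  [NormedAddCommGroup Y] [NormedSpace ℝ Y]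
  [NormedAddCommGroup Z] [NormedSpace ℝ Z]

section ConeInterior

variable {R E : Type*} [Semiring R] [PartialOrder R] [IsOrderedRing R]
  [AddCommGroup E] [Module R E] [TopologicalSpace E] [ContinuousAdd E]

theorem pointedCone_add_mem_interior {K : PointedCone R E} {x y : E}
    (hx : x ∈ interior (K : Set E)) (hy : y ∈ K) : x + y ∈ interior (K : Set E) := by
  have hsub : (K : Set E) + K ⊆ K := Set.add_subset_iff.2 fun _ ha _ hb => K.add_mem ha hb
  exact interior_mono hsub (subset_interior_add_left (Set.add_mem_add hx hy))

end ConeInterior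

section SolidCone

variable {𝕜 E : Type*}
  [Field 𝕜] [LinearOrder 𝕜] [IsStrictOrderedRing 𝕜] [TopologicalSpace 𝕜] [OrderTopology 𝕜]
  [AddCommGroup E] [Module 𝕜 E] [TopologicalSpace E] [ContinuousSMul 𝕜 E]
  {K : PointedCone 𝕜 E}

theorem pointedCone_eq_top_of_zero_mem_interior (h : (0 : E) ∈ interior (K : Set E)) : K = ⊤ := by
  refine Submodule.eq_top_iff'.2 fun w => ?_
  have hlim : Tendsto (fun t : 𝕜 => t • w) (𝓝[>] 0) (𝓝 0) :=
    ((by fun_prop : Continuous fun t : 𝕜 => t • w).tendsto' 0 0 (zero_smul 𝕜 w)).mono_left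
      nhdsWithin_le_nhds
  have hK : ∀ᶠ t : 𝕜 in 𝓝[>] 0, t • w ∈ K := hlim (mem_interior_iff_mem_nhds.1 h)
  obtain ⟨t, htK, ht⟩ := (hK.and self_mem_nhdsWithin).exists
  exact (K.smul_mem_iff ht).1 htK

theorem neg_notMem_pointedCone_of_mem_interior [ContinuousAdd E] (hK : K ≠ ⊤) {x : E}
    (hx : x ∈ interior (K : Set E)) : -x ∉ K := fun hneg =>
  hK <| pointedCone_eq_top_of_zero_mem_interior <|
    add_neg_cancel x ▸ pointedCone_add_mem_interior hx hneg

theorem disjoint_add_pointedCone_sub_interior [ContinuousAdd E] (hK : K ≠ ⊤) {A : Set E} {y₀ : E}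
    (hy₀ : A ∩ ({y₀} - (K : Set E)) ⊆ {y₀} + (K : Set E)) :
    Disjoint (A + (K : Set E)) ({y₀} - interior (K : Set E)) := by
  rw [Set.disjoint_left, Set.singleton_sub]
  rintro _ ⟨v, hv, p, hp, rfl⟩ ⟨k, hk, hvp : y₀ - k = v + p⟩
  have hint : y₀ - v ∈ interior (K : Set E) := by
    have heq : k + p = y₀ - v := by
      rw [eq_sub_iff_add_eq, add_assoc, add_comm p v, ← hvp, add_sub_cancel]
    exact heq ▸ pointedCone_add_mem_interior hk hp
  have hle : v ∈ {y₀} - (K : Set E) := ⟨y₀, rfl, y₀ - v, interior_subset hint, sub_sub_cancel y₀ v⟩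
  obtain ⟨_, rfl, q, hq, rfl⟩ := hy₀ ⟨hv, hle⟩
  refine neg_notMem_pointedCone_of_mem_interior hK hint ?_
  simpa using hq

variable [IsTopologicalAddGroup E]

theorem zero_mem_closure_interior_pointedCone (hK : (interior (K : Set E)).Nonempty) :
    (0 : E) ∈ closure (interior (K : Set E)) := by
  rw [K.convex.closure_interior_eq_closure_of_nonempty_interior hK]
  exact subset_closure K.zero_mem

theorem notMem_interior_of_disjoint_sub_interior (hK : (interior (K : Set E)).Nonempty)
    {S : Set E} {y₀ : E} (hS : Disjoint S ({y₀} - interior (K : Set E))) : y₀ ∉ interior S := by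
  have hlim : y₀ ∈ closure ({y₀} - interior (K : Set E)) := by
    rw [Set.singleton_sub]
    have hmaps : Set.MapsTo (y₀ - ·) (interior (K : Set E)) ((y₀ - ·) '' interior (K : Set E)) :=
      Set.mapsTo_image _ _
    simpa only [sub_zero] using
      map_mem_closure (by fun_prop) (zero_mem_closure_interior_pointedCone hK) hmaps
  exact fun hy₀ =>
    Set.disjoint_left.1 ((hS.mono_left interior_subset).closure_right isOpen_interior) hy₀ hlim

theorem mem_frontier_add_pointedCone (hK : K ≠ ⊤) (hint : (interior (K : Set E)).Nonempty)
    {A : Set E} {y₀ : E} (hcl : y₀ ∈ closure A)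
    (hnd : A ∩ ({y₀} - (K : Set E)) ⊆ {y₀} + (K : Set E)) :
    y₀ ∈ frontier (A + (K : Set E)) :=
  ⟨closure_mono (Set.subset_add_left A K.zero_mem) hcl,
    notMem_interior_of_disjoint_sub_interior hint (disjoint_add_pointedCone_sub_interior hK hnd)⟩

theorem stmt_7_general {T : Type*} [TopologicalSpace T] (V : T → Set E)
    (hK : K ≠ ⊤) (hint : (interior (K : Set E)).Nonempty) {z₀ : T} {y₀ : E}
    (hcl : y₀ ∈ closure (V z₀)) (hnd : V z₀ ∩ ({y₀} - (K : Set E)) ⊆ {y₀} + (K : Set E)) :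
    (z₀, y₀) ∈ frontier {p : T × E | p.2 ∈ V p.1 + (K : Set E)} :=
  (Continuous.prodMk_right z₀).frontier_preimage_subset _
    (mem_frontier_add_pointedCone hK hint hcl hnd)

end SolidCone

/-- A convex cone in the sense of `IsCone`, bundled as a `PointedCone` (one containing `0`, not one
meeting its negative only in `0` as in `IsPointed`) to access Mathlib's theory of cones. -/
def IsCone.toPointedCone {E : Type*} [NormedAddCommGroup E] [NormedSpace ℝ E] {K : Set E}
    (hK : IsCone K) (hconv : Convex ℝ K) : PointedCone ℝ E where
  carrier := K
  zero_mem' := by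
    obtain ⟨a, ha⟩ := hK.1
    exact zero_smul ℝ a ▸ hK.2 0 le_rfl a ha
  add_mem' {x y} hx hy := by
    have hmid : midpoint ℝ x y ∈ K := hconv.midpoint_mem hx hy
    have htwo : (2 : ℝ) • midpoint ℝ x y = x + y := by
      rw [two_smul, midpoint_add_self]
    exact htwo ▸ hK.2 2 zero_le_two _ hmid
  smul_mem' c x hx := hK.2 c c.2 x hx

theorem stmt_7 (Ω : Set X) (F : X → Set Y) (G : X → Set Z) (Zp : Set Z) (Yp : Set Y)
    (hSt : StandingHyp Ω F G Zp Yp)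
    (y0 : Y) (hy0 : Nondominated Ω F G Zp Yp y0) :
    ((0:Z), y0) ∈ closure (GraphVplus Ω F G Zp Yp) ∧
      ((0:Z), y0) ∉ interior (GraphVplus Ω F G Zp Yp) := by
  obtain ⟨hcone, ⟨-, hne_univ⟩, hsolid, hconv, -⟩ := hSt
  exact stmt_7_general (K := hcone.toPointedCone hconv) (Vmap Ω F G Zp)
    (fun htop => hne_univ (congrArg SetLike.coe htop)) hsolid hy0.1 hy0.2

end Paper
end

section
/- Let y_0 be a nondominated point of (P(0)). Then S_{Y_+}(y_0) is a convex cone in Z*×Y* containing a nonzero element; in particular S′_{Y_+}(y_0) := S_{Y_+}(y_0) ∖ {(0,0)} is nonempty. -/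
open Pointwise Filter Topology

namespace Paper

variable {X Y Z : Type*}
  [NormedAddCommGroup X] [NormedSpace ℝ X]
  [NormedAddCommGroup Y] [NormedSpace ℝ Y]
  [NormedAddCommGroup Z] [NormedSpace ℝ Z]

/-! Order `Z × Y` by the cone `Z₊ × Y₊`. A pair `(z*, y*)` lies in `S_{Y₊}(y₀)` exactly when, as a
functional on `Z × Y`, it is nonnegative on `Z₊ × Y₊` and minorised on `Graph(V + Y₊)` by its value
at `(0, y₀)`; these inequalities are homogeneous in `(z*, y*)`. As `0 ∉ int Y₊`, nondominance keeps
`V(0)` away from `y₀ - int Y₊`. Since `V` is nondecreasing, no point of the graph then precedes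
`(0, y₀)` with respect to the interior of `Z₊ × Y₊`, and the Hahn–Banach theorem provides a nonzero
functional of the required kind. -/

section ConvexCones

theorem nonpos_of_bddAbove_image_pointedCone {𝕜 E : Type*} [Field 𝕜] [LinearOrder 𝕜]
    [IsStrictOrderedRing 𝕜] [AddCommMonoid E] [Module 𝕜 E] {C : PointedCone 𝕜 E} {f : E →ₗ[𝕜] 𝕜}
    (hf : BddAbove (f '' C)) {c : E} (hc : c ∈ C) : f c ≤ 0 := by
  obtain ⟨u, hu⟩ := hf
  by_contra! hpos
  have h_scaled : ((|u| + 1) / f c) • c ∈ C := C.smul_mem (by positivity) hc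
  have h_le := hu (Set.mem_image_of_mem f h_scaled)
  rw [map_smul, smul_eq_mul, div_mul_cancel₀ _ hpos.ne'] at h_le
  linarith [le_abs_self u]

theorem add_mem_interior {E S : Type*} [AddGroup E] [TopologicalSpace E] [IsTopologicalAddGroup E]
    [SetLike S E] [AddMemClass S E] {C : S} {x y : E} (hx : x ∈ C)
    (hy : y ∈ interior (C : Set E)) : x + y ∈ interior (C : Set E) := by
  refine interior_mono ?_ (subset_interior_add_right (Set.add_mem_add hx hy))
  rintro _ ⟨a, ha, b, hb, rfl⟩
  exact add_mem ha hb

variable {E : Type*} [AddCommGroup E] [TopologicalSpace E] [Module ℝ E] [ContinuousSMul ℝ E]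
  {C : PointedCone ℝ E}

theorem eq_univ_of_zero_mem_interior (h : 0 ∈ interior (C : Set E)) : (C : Set E) = Set.univ := by
  refine Set.eq_univ_of_forall fun x ↦ ?_
  obtain ⟨r, hr, c, hc, rfl⟩ :=
    (absorbent_nhds_zero (𝕜 := ℝ) (mem_interior_iff_mem_nhds.1 h)).gauge_set_nonempty (x := x)
  exact C.smul_mem hr.le hc

variable [IsTopologicalAddGroup E]

theorem disjoint_sub_interior_of_inter_sub_subset (hC : (C : Set E) ≠ Set.univ) {A : Set E} {y : E}
    (h : A ∩ ({y} - (C : Set E)) ⊆ {y} + (C : Set E)) :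
    Disjoint A ({y} - interior (C : Set E)) := by
  simp only [Set.singleton_sub, Set.singleton_add] at h ⊢
  refine Set.disjoint_left.2 ?_
  rintro _ hA ⟨c, hc, rfl⟩
  obtain ⟨d, hd, hdc⟩ := h ⟨hA, c, interior_subset hc, rfl⟩
  have h_sum : d + c = 0 := by grind
  exact hC (eq_univ_of_zero_mem_interior (h_sum ▸ add_mem_interior hd hc))

theorem exists_ne_zero_nonneg_on_pointedCone_forall_le (hC : (interior (C : Set E)).Nonempty)
    {B : Set E} (hB : Convex ℝ B) (hB_ne : B.Nonempty) {x : E}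
    (hx : ∀ b ∈ B, x - b ∉ interior (C : Set E)) :
    ∃ f : StrongDual ℝ E, f ≠ 0 ∧ (∀ c ∈ C, 0 ≤ f c) ∧ ∀ b ∈ B, f x ≤ f b := by
  have h_disj : Disjoint (interior (C : Set E)) ({x} - B) := by
    rw [Set.singleton_sub]
    exact Set.disjoint_right.2 (Set.forall_mem_image.2 hx)
  obtain ⟨f, u, hf, hfC, hfB⟩ := geometric_hahn_banach_of_nonempty_interior C.convex
    ((convex_singleton x).sub hB) h_disj hC ((Set.singleton_nonempty x).sub hB_ne)
  have hu : 0 ≤ u := by simpa using hfC 0 C.zero_mem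
  refine ⟨-f, neg_ne_zero.2 hf, fun c hc ↦ ?_, fun b hb ↦ ?_⟩
  · have h_bdd : BddAbove (f.toLinearMap '' C) := ⟨u, Set.forall_mem_image.2 hfC⟩
    exact neg_nonneg.2 (nonpos_of_bddAbove_image_pointedCone h_bdd hc)
  · have h_sub : 0 ≤ f x - f b := hu.trans (map_sub f x b ▸ hfB _ (Set.sub_mem_sub rfl hb))
    exact neg_le_neg (sub_nonneg.1 h_sub)

end ConvexCones

theorem IsCone.exists_pointedCone_coe_eq {E : Type*} [NormedAddCommGroup E] [NormedSpace ℝ E]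
    {K : Set E} (hK : IsCone K) (hK_conv : Convex ℝ K) :
    ∃ C : PointedCone ℝ E, (C : Set E) = K := by
  obtain ⟨⟨x, hx⟩, h_smul⟩ := hK
  have h_add {a b : E} (ha : a ∈ K) (hb : b ∈ K) : a + b ∈ K := by
    have h_mid := h_smul 2 zero_le_two _ (hK_conv.midpoint_mem ha hb)
    rwa [two_smul, midpoint_add_self] at h_mid
  exact ⟨{ carrier := K
           zero_mem' := zero_smul ℝ x ▸ h_smul 0 le_rfl x hx
           add_mem' := h_add
           smul_mem' := fun r x hx ↦ h_smul r r.2 x hx }, rfl⟩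

section ValueMap

variable {X Y Z : Type*} [NormedAddCommGroup Z] {Ω : Set X} {F : X → Set Y} {G : X → Set Z}

theorem mem_vmap_iff {Zp : Set Z} {z : Z} {y : Y} :
    y ∈ Vmap Ω F G Zp z ↔ ∃ x ∈ Ω, z ∈ G x + Zp ∧ y ∈ F x := by
  have h_feasible (x : X) : (G x ∩ ({z} - Zp)).Nonempty ↔ z ∈ G x + Zp := by
    simp only [Set.singleton_sub, Set.mem_add, Set.Nonempty, Set.mem_inter_iff, Set.mem_image]
    grind
  simp only [Vmap, Smap, h_feasible, Set.mem_iUnion, Set.mem_ofPred_eq, exists_prop, and_assoc]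

theorem vmap_subset_vmap_of_sub_mem {S : Type*} [SetLike S Z] [AddMemClass S Z] {Zp : S} {z z' : Z}
    (h : z' - z ∈ Zp) : Vmap Ω F G Zp z ⊆ Vmap Ω F G Zp z' := by
  intro y hy
  obtain ⟨x, hx, ⟨g, hg, k, hk, rfl⟩, hyF⟩ := mem_vmap_iff.1 hy
  exact mem_vmap_iff.2 ⟨x, hx, ⟨g, hg, _, add_mem hk h, by grind⟩, hyF⟩

variable [NormedAddCommGroup Y]

theorem nonempty_graphVplus {Zp : Set Z} {Yp : Set Y} (hV : (Vmap Ω F G Zp 0).Nonempty)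
    (hY : Yp.Nonempty) : (GraphVplus Ω F G Zp Yp).Nonempty :=
  (hV.add hY).elim fun y hy ↦ ⟨(0, y), hy⟩

theorem mem_graphVplus_iff {Zp : Set Z} {Yp : Set Y} {q : Z × Y} :
    q ∈ GraphVplus Ω F G Zp Yp ↔ ∃ x ∈ Ω, q.1 ∈ G x + Zp ∧ q.2 ∈ F x + Yp := by
  simp only [GraphVplus, Set.mem_ofPred_eq, Set.mem_add (s := Vmap _ _ _ _ _), mem_vmap_iff,
    Set.mem_add (s := F _)]
  grind

theorem sub_notMem_interior_of_mem_graphVplus {S T : Type*} [SetLike S Z] [AddMemClass S Z]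
    [SetLike T Y] [AddMemClass T Y] {Zp : S} {Yp : T} {y0 : Y}
    (hy0 : Disjoint (Vmap Ω F G Zp 0) ({y0} - interior (Yp : Set Y))) {q : Z × Y}
    (hq : q ∈ GraphVplus Ω F G Zp Yp) :
    (0, y0) - q ∉ interior ((Zp : Set Z) ×ˢ (Yp : Set Y)) := by
  rw [interior_prod_eq]
  rintro ⟨hz, hy⟩
  obtain ⟨v, hv, w, hw, hvw⟩ := hq
  have hv_zero : v ∈ Vmap Ω F G Zp 0 := vmap_subset_vmap_of_sub_mem (interior_subset hz) hv
  have h_int : w + (y0 - q.2) ∈ interior (Yp : Set Y) := add_mem_interior hw hy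
  exact Set.disjoint_left.1 hy0 hv_zero ⟨y0, rfl, _, h_int, by grind⟩

theorem convex_graphVplus [AddCommGroup X] [Module ℝ X] [NormedSpace ℝ Y] [NormedSpace ℝ Z]
    {Zp : Set Z} {Yp : Set Y} (hF : Convex ℝ {p : X × Y | p.1 ∈ Ω ∧ p.2 ∈ F p.1 + Yp})
    (hG : Convex ℝ {p : X × Z | p.1 ∈ Ω ∧ p.2 ∈ G p.1 + Zp}) :
    Convex ℝ (GraphVplus Ω F G Zp Yp) := by
  intro p hp q hq a b ha hb hab
  obtain ⟨x, hx, hpG, hpF⟩ := mem_graphVplus_iff.1 hp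
  obtain ⟨x', hx', hqG, hqF⟩ := mem_graphVplus_iff.1 hq
  have h_epiF := hF (x := (x, p.2)) ⟨hx, hpF⟩ (y := (x', q.2)) ⟨hx', hqF⟩ ha hb hab
  have h_epiG := hG (x := (x, p.1)) ⟨hx, hpG⟩ (y := (x', q.1)) ⟨hx', hqG⟩ ha hb hab
  exact mem_graphVplus_iff.2 ⟨a • x + b • x', h_epiF.1, h_epiG.2, h_epiF.2⟩

end ValueMap

section Sdual

variable {X Y Z : Type*} [NormedAddCommGroup Y] [NormedSpace ℝ Y] [NormedAddCommGroup Z]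
  [NormedSpace ℝ Z] {Ω : Set X} {F : X → Set Y} {G : X → Set Z} {Zp : Set Z} {Yp : Set Y} {y0 : Y}

theorem mem_sdual_iff {p : (Z →L[ℝ] ℝ) × (Y →L[ℝ] ℝ)} :
    p ∈ Sdual Ω F G Zp Yp y0 ↔ (∀ c ∈ Zp ×ˢ Yp, 0 ≤ p.1.coprod p.2 c) ∧
      ∀ q ∈ GraphVplus Ω F G Zp Yp, p.1.coprod p.2 (0, y0) ≤ p.1.coprod p.2 q := by
  refine and_congr ⟨?_, ?_⟩ (by simp)
  · rintro h ⟨z, y⟩ ⟨hz, hy⟩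
    have h_le := h (-z) (Set.neg_mem_neg.2 hz) (y0 - y) (Set.sub_mem_sub rfl hy)
    rw [map_neg, map_sub] at h_le
    rw [ContinuousLinearMap.coprod_apply]
    linarith
  · rintro h z hz _ ⟨_, rfl, y, hy, rfl⟩
    have h_nonneg := h (-z, y) ⟨hz, hy⟩
    rw [ContinuousLinearMap.coprod_apply, map_neg] at h_nonneg
    rw [map_sub]
    linarith

theorem smul_add_smul_mem_sdual {p q : (Z →L[ℝ] ℝ) × (Y →L[ℝ] ℝ)}
    (hp : p ∈ Sdual Ω F G Zp Yp y0) (hq : q ∈ Sdual Ω F G Zp Yp y0) {a b : ℝ} (ha : 0 ≤ a)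
    (hb : 0 ≤ b) : a • p + b • q ∈ Sdual Ω F G Zp Yp y0 := by
  rw [mem_sdual_iff] at hp hq ⊢
  have h_eval (w : Z × Y) : (a • p + b • q).1.coprod (a • p + b • q).2 w =
      a * p.1.coprod p.2 w + b * q.1.coprod q.2 w := by
    simp only [ContinuousLinearMap.coprod_apply, Prod.fst_add, Prod.snd_add, Prod.smul_fst,
      Prod.smul_snd, add_apply, smul_apply, smul_eq_mul]
    ring
  simp only [h_eval]
  refine ⟨fun c hc ↦ ?_, fun r hr ↦ ?_⟩
  · exact add_nonneg (mul_nonneg ha (hp.1 c hc)) (mul_nonneg hb (hq.1 c hc))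
  · gcongr
    exacts [hp.2 r hr, hq.2 r hr]

theorem convex_sdual : Convex ℝ (Sdual Ω F G Zp Yp y0) :=
  fun _ hp _ hq _ _ ha hb _ ↦ smul_add_smul_mem_sdual hp hq ha hb

theorem isCone_sdual : IsCone (Sdual Ω F G Zp Yp y0) := by
  refine ⟨⟨0, mem_sdual_iff.2 (by simp)⟩, fun r hr p hp ↦ ?_⟩
  simpa using smul_add_smul_mem_sdual hp hp hr le_rfl

theorem exists_mem_sdual_ne_zero {Zp : PointedCone ℝ Z} {Yp : PointedCone ℝ Y}
    (hZ : IsSolid (Zp : Set Z)) (hY : IsSolid (Yp : Set Y))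
    (hV : Convex ℝ (GraphVplus Ω F G Zp Yp)) (hV_ne : (GraphVplus Ω F G Zp Yp).Nonempty)
    (hy0 : Disjoint (Vmap Ω F G Zp 0) ({y0} - interior (Yp : Set Y))) :
    ∃ p ∈ Sdual Ω F G Zp Yp y0, p ≠ 0 := by
  have h_int : (interior (Zp.prod Yp : Set (Z × Y))).Nonempty := by
    rw [Submodule.prod_coe, interior_prod_eq]
    exact hZ.prod hY
  obtain ⟨f, hf, hfC, hfV⟩ := exists_ne_zero_nonneg_on_pointedCone_forall_le h_int hV hV_ne
    fun _ ↦ sub_notMem_interior_of_mem_graphVplus hy0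
  obtain ⟨p, rfl⟩ := (ContinuousLinearMap.coprodEquiv (S := ℝ)).surjective f
  exact ⟨p, mem_sdual_iff.2 ⟨hfC, hfV⟩, fun hp ↦ hf (hp ▸ map_zero _)⟩

theorem stmt_8_general {Zp : PointedCone ℝ Z} {Yp : PointedCone ℝ Y}
    (hZ : IsSolid (Zp : Set Z)) (hY : IsSolid (Yp : Set Y))
    (hV : Convex ℝ (GraphVplus Ω F G Zp Yp)) (hV_ne : (GraphVplus Ω F G Zp Yp).Nonempty)
    (hy0 : Disjoint (Vmap Ω F G Zp 0) ({y0} - interior (Yp : Set Y))) :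
    Convex ℝ (Sdual Ω F G Zp Yp y0) ∧ IsCone (Sdual Ω F G Zp Yp y0) ∧
      ∃ p ∈ Sdual Ω F G Zp Yp y0, p ≠ 0 :=
  ⟨convex_sdual, isCone_sdual, exists_mem_sdual_ne_zero hZ hY hV hV_ne hy0⟩

end Sdual

theorem stmt_8 (Ω : Set X) (F : X → Set Y) (G : X → Set Z) (Zp : Set Z) (Yp : Set Y)
    (hSt : StandingHyp Ω F G Zp Yp)
    (y0 : Y) (hy0 : Nondominated Ω F G Zp Yp y0) :
    Convex ℝ (Sdual Ω F G Zp Yp y0) ∧ IsCone (Sdual Ω F G Zp Yp y0) ∧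
      ∃ p ∈ Sdual Ω F G Zp Yp y0, p ≠ 0 := by
  obtain ⟨hY, ⟨-, hY_ne⟩, hY_solid, hY_conv, hZ, -, hZ_solid, hZ_conv, -, -, hF, hG⟩ := hSt
  obtain ⟨Zp, rfl⟩ := hZ.exists_pointedCone_coe_eq hZ_conv
  obtain ⟨Yp, rfl⟩ := hY.exists_pointedCone_coe_eq hY_conv
  exact stmt_8_general hZ_solid hY_solid (convex_graphVplus hF hG)
    (nonempty_graphVplus (closure_nonempty_iff.1 ⟨y0, hy0.1⟩) hY.1)
    (disjoint_sub_interior_of_inter_sub_subset hY_ne hy0.2)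

end Paper
end

section
/- Let y_0 be a nondominated point of (P(0)), let Δ ∈ Γ_{y_0}, assume the Slater condition, and suppose moreover that y_0 is a minimal point of (P(0)) achieved at a feasible solution x_0, i.e. x_0 ∈ Ω, G(x_0) ∩ (−Z_+) ≠ ∅, and y_0 ∈ F(x_0). Then, writing U_Δ := ∪_{x∈Ω}(F(x)+Δ(G(x)+Z_+)), one has y_0 ∈ F(x_0)+Δ(G(x_0)+Z_+) ⊆ U_Δ, the set U_Δ satisfies U_Δ ∩ (y_0−Y_+) ⊆ y_0+Y_+, and Δ(G(x_0)+Z_+) ∩ (−Y_+) ⊆ (−Y_+) ∩ Y_+. -/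
open Pointwise Filter Topology

namespace Paper

variable {X Y Z : Type*}
  [NormedAddCommGroup X] [NormedSpace ℝ X]
  [NormedAddCommGroup Y] [NormedSpace ℝ Y]
  [NormedAddCommGroup Z] [NormedSpace ℝ Z]

theorem inter_neg_subset_of_singleton_add_inter_subset {A : Type*} [AddGroup A] {a : A}
    {B C : Set A} (h : ({a} + B) ∩ ({a} - C) ⊆ {a} + C) : B ∩ -C ⊆ -C ∩ C := by
  rintro b ⟨hbB, hbC⟩
  have hsub : a + b ∈ ({a} : Set A) - C := ⟨a, rfl, -b, hbC, sub_neg_eq_add a b⟩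
  have hadd : a + b ∈ ({a} : Set A) + C := h ⟨Set.add_mem_add rfl hbB, hsub⟩
  rw [Set.singleton_add] at hadd
  exact ⟨hbC, (add_right_injective a).mem_set_image.1 hadd⟩

theorem zero_mem_imageSet_add {M N : Type*} [AddGroup M] [Zero N] {Δ : M → Set N} {S K : Set M}
    (hS : (S ∩ -K).Nonempty) (hΔ0 : 0 ∈ Δ 0) : 0 ∈ imageSet Δ (S + K) := by
  obtain ⟨z, hzS, hzK⟩ := hS
  exact Set.mem_biUnion ⟨z, hzS, -z, hzK, add_neg_cancel z⟩ hΔ0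

section Duality

variable {X Y Z : Type*} [NormedAddCommGroup Z]
  {Ω : Set X} {F : X → Set Y} {G : X → Set Z} {Zp : Set Z} {Yp : Set Y} {y0 : Y}
  {Δ : Z → Set Y}

theorem mem_Vmap_iff {z : Z} {y : Y} :
    y ∈ Vmap Ω F G Zp z ↔ ∃ x ∈ Ω, z ∈ G x + Zp ∧ y ∈ F x := by
  have feasible_iff (x : X) : (G x ∩ ({z} - Zp)).Nonempty ↔ z ∈ G x + Zp := by
    simp only [Set.singleton_sub, Set.mem_add]
    constructor
    · rintro ⟨_, hg, k, hk, rfl⟩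
      exact ⟨z - k, hg, k, hk, sub_add_cancel z k⟩
    · rintro ⟨g, hg, k, hk, rfl⟩
      exact ⟨g, hg, k, hk, add_sub_cancel_right g k⟩
  simp only [Vmap, Smap, Set.mem_iUnion₂, Set.mem_ofPred_eq, feasible_iff, exists_prop, and_assoc]

variable [NormedAddCommGroup Y]

theorem Umap_eq_iUnion_Vmap_add : Umap Ω F G Zp Δ = ⋃ z, (Vmap Ω F G Zp z + Δ z) := by
  ext u
  simp only [Umap, imageSet, Set.mem_iUnion, Set.mem_add, mem_Vmap_iff, exists_prop]
  constructor
  · rintro ⟨x, hx, y, hy, d, ⟨z, hz, hd⟩, rfl⟩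
    exact ⟨z, y, ⟨x, hx, hz, hy⟩, d, hd, rfl⟩
  · rintro ⟨z, y, ⟨x, hx, hz, hy⟩, d, hd, rfl⟩
    exact ⟨x, hx, y, hy, d, ⟨z, hz, hd⟩, rfl⟩

theorem nonneg_of_mem_Sdual [NormedSpace ℝ Y] [NormedSpace ℝ Z]
    {p : (Z →L[ℝ] ℝ) × (Y →L[ℝ] ℝ)} (hp : p ∈ Sdual Ω F G Zp Yp y0) (hZ : 0 ∈ Zp) :
    ∀ y ∈ Yp, 0 ≤ p.2 y := by
  intro y hy
  have hle : p.1 0 + p.2 (y0 - y) ≤ p.2 y0 :=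
    hp.1 0 (by simpa only [Set.mem_neg, neg_zero] using hZ) _ (Set.sub_mem_sub rfl hy)
  rw [map_zero, map_sub] at hle
  linarith

theorem le_add_of_mem_Sdual [NormedSpace ℝ Y] [NormedSpace ℝ Z]
    {p : (Z →L[ℝ] ℝ) × (Y →L[ℝ] ℝ)} (hp : p ∈ Sdual Ω F G Zp Yp y0) (hY : 0 ∈ Yp) :
    ∀ z, ∀ y ∈ Vmap Ω F G Zp z, p.2 y0 ≤ p.1 z + p.2 y :=
  fun z y hy ↦ hp.2 (z, y) ⟨y, hy, 0, hY, add_zero y⟩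

theorem mem_Vmap_zero_of_mem_Umap {zs : Z → ℝ} {ys : Y →+ ℝ}
    (hV : ∀ z, ∀ y ∈ Vmap Ω F G Zp z, ys y0 ≤ zs z + ys y)
    (hΔ : graph Δ \ {0} ⊆ {p | 0 < -zs p.1 + ys p.2})
    {u : Y} (hu : u ∈ Umap Ω F G Zp Δ) (hle : ys u ≤ ys y0) : u ∈ Vmap Ω F G Zp 0 := by
  rw [Umap_eq_iUnion_Vmap_add] at hu
  obtain ⟨z, y, hy, d, hd, rfl⟩ := Set.mem_iUnion.1 hu
  have hnonpos : -zs z + ys d ≤ 0 := by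
    have hsupport : ys y0 ≤ zs z + ys y := hV z y hy
    rw [map_add] at hle
    linarith
  have hzero : (z, d) = 0 := by
    by_contra hne
    exact hnonpos.not_gt (hΔ ⟨hd, hne⟩)
  obtain ⟨rfl, rfl⟩ := Prod.mk.inj hzero
  simpa only [add_zero] using hy

theorem Umap_inter_sub_subset_Vmap_zero {zs : Z → ℝ} {ys : Y →+ ℝ} (hys : ∀ y ∈ Yp, 0 ≤ ys y)
    (hV : ∀ z, ∀ y ∈ Vmap Ω F G Zp z, ys y0 ≤ zs z + ys y)
    (hΔ : graph Δ \ {0} ⊆ {p | 0 < -zs p.1 + ys p.2}) :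
    Umap Ω F G Zp Δ ∩ ({y0} - Yp) ⊆ Vmap Ω F G Zp 0 := by
  rintro u ⟨hu, huY⟩
  rw [Set.singleton_sub] at huY
  obtain ⟨q, hq, rfl⟩ := huY
  refine mem_Vmap_zero_of_mem_Umap hV hΔ hu ?_
  rw [map_sub]
  exact sub_le_self _ (hys q hq)

theorem stmt_10_general {zs : Z → ℝ} {ys : Y →+ ℝ} (hys : ∀ y ∈ Yp, 0 ≤ ys y)
    (hV : ∀ z, ∀ y ∈ Vmap Ω F G Zp z, ys y0 ≤ zs z + ys y)
    (hy0 : Vmap Ω F G Zp 0 ∩ ({y0} - Yp) ⊆ {y0} + Yp)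
    (hΔ0 : 0 ∈ Δ 0) (hΔ : graph Δ \ {0} ⊆ {p | 0 < -zs p.1 + ys p.2})
    {x0 : X} (hx0Ω : x0 ∈ Ω) (hx0feas : (G x0 ∩ -Zp).Nonempty) (hy0F : y0 ∈ F x0) :
    y0 ∈ F x0 + imageSet Δ (G x0 + Zp) ∧
      F x0 + imageSet Δ (G x0 + Zp) ⊆ Umap Ω F G Zp Δ ∧
      Umap Ω F G Zp Δ ∩ ({y0} - Yp) ⊆ {y0} + Yp ∧
      imageSet Δ (G x0 + Zp) ∩ (-Yp) ⊆ (-Yp) ∩ Yp := by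
  have hmem : y0 ∈ F x0 + imageSet Δ (G x0 + Zp) :=
    ⟨y0, hy0F, 0, zero_mem_imageSet_add hx0feas hΔ0, add_zero y0⟩
  have hsubU : F x0 + imageSet Δ (G x0 + Zp) ⊆ Umap Ω F G Zp Δ :=
    Set.subset_biUnion_of_mem (u := fun x ↦ F x + imageSet Δ (G x + Zp)) hx0Ω
  have hmin : Umap Ω F G Zp Δ ∩ ({y0} - Yp) ⊆ {y0} + Yp := fun u hu ↦
    hy0 ⟨Umap_inter_sub_subset_Vmap_zero hys hV hΔ hu, hu.2⟩
  have htranslate : {y0} + imageSet Δ (G x0 + Zp) ⊆ Umap Ω F G Zp Δ :=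
    (Set.add_subset_add_right (Set.singleton_subset_iff.2 hy0F)).trans hsubU
  exact ⟨hmem, hsubU, hmin, inter_neg_subset_of_singleton_add_inter_subset
    ((Set.inter_subset_inter_left _ htranslate).trans hmin)⟩

end Duality

theorem stmt_10 (Ω : Set X) (F : X → Set Y) (G : X → Set Z) (Zp : Set Z) (Yp : Set Y)
    (hSt : StandingHyp Ω F G Zp Yp)
    (y0 : Y) (hy0 : Nondominated Ω F G Zp Yp y0)
    (Δ : Z → Set Y) (hΔ : Δ ∈ Gamma Ω F G Zp Yp y0)
    (hSl : Slater Ω F G Zp)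
    (x0 : X) (hx0Ω : x0 ∈ Ω) (hx0feas : (G x0 ∩ (-Zp)).Nonempty) (hy0F : y0 ∈ F x0) :
    y0 ∈ F x0 + imageSet Δ (G x0 + Zp) ∧
      F x0 + imageSet Δ (G x0 + Zp) ⊆ Umap Ω F G Zp Δ ∧
      Umap Ω F G Zp Δ ∩ ({y0} - Yp) ⊆ {y0} + Yp ∧
      imageSet Δ (G x0 + Zp) ∩ (-Yp) ⊆ (-Yp) ∩ Yp := by
  obtain ⟨hYcone, -, -, -, hZcone, -⟩ := hSt
  obtain ⟨p, ⟨hp, -⟩, ⟨-, -, hΔcone, -⟩, hΔpos⟩ := Set.mem_iUnion₂.1 hΔ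
  exact stmt_10_general (ys := p.2) (nonneg_of_mem_Sdual hp hZcone.zero_mem)
    (le_add_of_mem_Sdual hp hYcone.zero_mem) hy0.2 hΔcone.zero_mem hΔpos hx0Ω hx0feas hy0F

end Paper
end
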